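/- Let $d \ge 2$ and let $D \subset \mathbb{R}^d$ be a bounded smooth domain with Poisson kernel $k_D(x,z)$, Green's kernel $g_D(x,y)$, and moment densities $\rho_D(x, z_1, \ldots, z_n)$ defined recursively by $\rho_D(x, z_{\{i\}}) = k_D(x, z_i)$ and $\rho_D(x, z_A) = \sum_{\emptyset \ne B \subsetneq A} \int_D g_D(x,y)\rho_D(y,z_B)\rho_D(y,z_{A\setminus B})\,dy$ for $|A| \ge 2$. Then for any compact $C \subset D$ there exists $\lambda > 0$, depending only on $C$ and $D$, such that $\rho_D(x, z_1, \ldots, z_n) \le \lambda^n\, \rho_D(x_0, z_1, \ldots, z_n)$ for all $n \ge 1$, all $x, x_0 \in C$, and all distinct $z_1, \ldots, z_n \in \partial D$. -/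

import Mathlib

open Metric ENNReal MeasureTheory Finset

section aux
variable {d : ℕ}
local notation "E" => EuclideanSpace ℝ (Fin d)

lemma aux_polar_zero [Nonempty (Fin d)] (f : E → ℝ)
    (h : ∀ θ : E, ‖θ‖ = 1 → ∫ t in Set.Ioi (0:ℝ), t ^ (d - 1) * f (t • θ) = 0) :
    ∫ x, f x = 0 := by
  have hfr : Module.finrank ℝ E = d := by simp
  have h1 : ∫ x, f x = ∫ x : ({(0)}ᶜ : Set E), f x.1 ∂((volume : Measure E).comap (↑)) := by
    rw [integral_subtype_comap (measurableSet_singleton _).compl fun x ↦ f x,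
        restrict_compl_singleton]
  have h2 := (volume : Measure E).measurePreserving_homeomorphUnitSphereProd.integral_comp
        (Homeomorph.measurableEmbedding _) (fun p => f (p.2.1 • p.1.1))
  have h3 : ∀ x : ({(0)}ᶜ : Set E),
      ((homeomorphUnitSphereProd E) x).2.1 • ((homeomorphUnitSphereProd E) x).1.1 = x.1 := by
    intro x
    have hx : ‖x.1‖ ≠ 0 := norm_ne_zero_iff.2 x.2
    simp [smul_smul, hx]
  simp only [h3] at h2
  rw [h1, h2]
  by_cases hi : Integrable (fun p : sphere (0:E) 1 × Set.Ioi (0:ℝ) => f (p.2.1 • p.1.1))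
     ((volume : Measure E).toSphere.prod (.volumeIoiPow (Module.finrank ℝ E - 1)))
  swap
  · exact integral_undef hi
  rw [integral_prod _ hi]
  refine integral_eq_zero_of_ae (Filter.Eventually.of_forall fun θ => ?_)
  have hθ : ‖θ.1‖ = 1 := by simp
  show ∫ t : Set.Ioi (0:ℝ), f (t.1 • θ.1) ∂_ = 0
  refine Eq.trans ?_ (h θ.1 hθ)
  simp only [Measure.volumeIoiPow, ENNReal.ofReal]
  rw [integral_withDensity_eq_integral_smul,
        integral_subtype_comap measurableSet_Ioi fun a ↦ Real.toNNReal (a ^ (Module.finrank ℝ E - 1)) • f (a • θ.1),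
        setIntegral_congr_fun measurableSet_Ioi fun x hx ↦ ?_]
  · rw [NNReal.smul_def, Real.coe_toNNReal _ (pow_nonneg hx.out.le _), hfr, smul_eq_mul]
  · exact (measurable_subtype_coe.pow_const _).real_toNNReal

lemma aux_reflect [Nonempty (Fin d)] (hd : 2 ≤ d) (b : E) (hb : 1 < ‖b‖) :
    ∫ x in ball b 1, (inner ℝ x (x - b)) / ‖x‖ ^ d = 0 := by
  rw [← integral_indicator measurableSet_ball]
  apply aux_polar_zero
  intro θ hθ
  set β : ℝ := inner ℝ θ b with hβ
  have hmem : ∀ t : ℝ, t • θ ∈ ball b 1 ↔ (t - β)^2 < 1 - ‖b‖^2 + β^2 := by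
    intro t
    rw [mem_ball, dist_eq_norm, ← sq_lt_sq₀ (norm_nonneg _) zero_le_one, norm_sub_sq_real,
      norm_smul, inner_smul_left, hθ]
    simp only [Real.norm_eq_abs, mul_one, sq_abs]
    simp only [conj_trivial]
    rw [← hβ]
    constructor <;> intro h <;> nlinarith
  have hval : ∀ t : ℝ, 0 < t → t ^ (d-1) * ((ball b 1).indicator
      (fun x => (inner ℝ x (x - b)) / ‖x‖ ^ d) (t • θ)) =
      {t : ℝ | (t - β)^2 < 1 - ‖b‖^2 + β^2}.indicator (fun t => t - β) t := by
    intro t ht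
    by_cases hm : t • θ ∈ ball b 1
    · rw [Set.indicator_of_mem hm, Set.indicator_of_mem (by exact (hmem t).1 hm)]
      rw [inner_sub_right, inner_smul_left, inner_smul_left, inner_smul_right,
        real_inner_self_eq_norm_sq, norm_smul, hθ, ← hβ]
      obtain ⟨m, rfl⟩ : ∃ m, d = m + 1 := ⟨d - 1, by omega⟩
      simp [abs_of_pos ht]
      field_simp
      ring
    · rw [Set.indicator_of_notMem hm, Set.indicator_of_notMem (by exact fun h => hm ((hmem t).2 h))]
      simp
  rw [setIntegral_congr_fun measurableSet_Ioi (fun t ht => hval t ht)]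
  by_cases hβ0 : β ≤ 0
  · refine setIntegral_eq_zero_of_forall_eq_zero fun t ht => ?_
    apply Set.indicator_of_notMem
    intro h
    have ht : 0 < t := ht
    simp only [Set.mem_ofPred_eq] at h
    nlinarith
  push Not at hβ0
  rw [setIntegral_eq_integral_of_forall_compl_eq_zero]
  · set F := {t : ℝ | (t - β)^2 < 1 - ‖b‖^2 + β^2}.indicator (fun t => t - β) with hF
    have h1 := integral_sub_left_eq_self F volume (2 * β)
    have h2 : ∀ t, F (2 * β - t) = - F t := by
      intro t
      have e : (2 * β - t - β)^2 = (t-β)^2 := by ring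
      simp only [hF, Set.indicator_apply, Set.mem_ofPred_eq, e]
      split_ifs <;> ring
    simp only [h2, integral_neg] at h1
    linarith
  · intro t ht
    apply Set.indicator_of_notMem
    intro h
    have ht : t ≤ 0 := by simpa using ht
    simp only [Set.mem_ofPred_eq] at h
    nlinarith

lemma aux_deriv_int [Nonempty (Fin d)] (Φ : ℝ → ℝ) (κ : ℝ) (hd : 2 ≤ d)
    (hΦ : ∀ r : ℝ, 0 < r → HasDerivAt Φ (κ / r ^ (d - 1)) r)
    (a : E) (s0 : ℝ) (hs : |s0| < ‖a‖) :
    HasDerivAt (fun s : ℝ => ∫ w in ball (0:E) 1, Φ ‖a + s • w‖)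
      (∫ w in ball (0:E) 1, κ * (inner ℝ (a + s0 • w) w / ‖a + s0 • w‖ ^ d)) s0 := by
  set m : ℝ := (|s0| + ‖a‖) / 2 with hm
  set η : ℝ := ‖a‖ - m with hη
  have hη0 : 0 < η := by rw [hη, hm]; linarith
  have hsm : |s0| < m := by rw [hm]; linarith
  have hm0 : 0 ≤ m := (abs_nonneg s0).trans hsm.le
  have low : ∀ s : ℝ, |s| < m → ∀ w ∈ closedBall (0:E) 1, η ≤ ‖a + s • w‖ := by
    intro s hs w hw
    have h1 : ‖a‖ ≤ ‖a + s • w‖ + ‖s • w‖ := by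
      have := norm_sub_le (a + s • w) (s • w)
      simpa using this
    have h2 : ‖s • w‖ ≤ m := by
      rw [norm_smul, Real.norm_eq_abs]
      have : ‖w‖ ≤ 1 := by simpa using hw
      nlinarith [norm_nonneg w, abs_nonneg s]
    rw [hη]; linarith
  have cont : ∀ s : ℝ, |s| < m → ContinuousOn (fun w : E => Φ ‖a + s • w‖) (closedBall 0 1) := by
    intro s hs w hw
    have h0 : 0 < ‖a + s • w‖ := hη0.trans_le (low s hs w hw)
    have h1 : ContinuousAt (fun w : E => ‖a + s • w‖) w := by fun_prop
    exact (ContinuousAt.comp (f := fun w : E => ‖a + s • w‖) (g := Φ) (hΦ _ h0).continuousAt h1).continuousWithinAt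
  have hnhds : {s : ℝ | |s| < m} ∈ nhds s0 :=
    (isOpen_lt continuous_abs continuous_const).mem_nhds hsm
  refine (hasDerivAt_integral_of_dominated_loc_of_deriv_le (bound := fun _ => |κ| / η ^ (d - 1))
    (F' := fun s w => κ * (inner ℝ (a + s • w) w / ‖a + s • w‖ ^ d))
    hnhds ?_ ?_ ?_ ?_ ?_ ?_).2
  · filter_upwards [hnhds] with s hs
    exact ((cont s hs).mono ball_subset_closedBall).aestronglyMeasurable measurableSet_ball
  · exact ((cont s0 hsm).integrableOn_compact (isCompact_closedBall _ _)).mono_set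
      ball_subset_closedBall
  · apply ContinuousOn.aestronglyMeasurable _ measurableSet_ball
    apply ContinuousOn.mul continuousOn_const
    apply ContinuousOn.div
    · fun_prop
    · fun_prop
    · intro w hw
      have := low s0 hsm w (ball_subset_closedBall hw)
      have : 0 < ‖a + s0 • w‖ := by linarith
      positivity
  · rw [ae_restrict_iff' measurableSet_ball]
    refine Filter.Eventually.of_forall fun w hw s hs => ?_
    have h1 := low s hs w (ball_subset_closedBall hw)
    have h0 : 0 < ‖a + s • w‖ := by linarith
    have hw1 : ‖w‖ ≤ 1 := by simpa using (ball_subset_closedBall hw)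
    rw [norm_mul, Real.norm_eq_abs, div_eq_mul_inv |κ|]
    apply mul_le_mul_of_nonneg_left _ (abs_nonneg _)
    rw [norm_div, norm_pow, norm_norm]
    have h2 : ‖(inner ℝ (a + s • w) w : ℝ)‖ ≤ ‖a + s • w‖ := by
      refine (norm_inner_le_norm _ _).trans ?_
      nlinarith [norm_nonneg w]
    calc _ ≤ ‖a + s • w‖ / ‖a + s • w‖ ^ d := by gcongr
      _ = (‖a + s • w‖ ^ (d-1))⁻¹ := by
        obtain ⟨m, rfl⟩ : ∃ m, d = m + 1 := ⟨d - 1, by omega⟩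
        simp only [Nat.add_sub_cancel, pow_succ]
        field_simp
      _ ≤ _ := by gcongr
  · exact integrableOn_const measure_ball_lt_top.ne
  · rw [ae_restrict_iff' measurableSet_ball]
    refine Filter.Eventually.of_forall fun w hw s hs => ?_
    have h1 := low s hs w (ball_subset_closedBall hw)
    have h0 : 0 < ‖a + s • w‖ := by linarith
    have hl : HasDerivAt (fun s : ℝ => a + s • w) w s := by
      simpa using ((hasDerivAt_id s).smul_const w).const_add a
    have hn : HasDerivAt (fun s : ℝ => ‖a + s • w‖) (inner ℝ (a + s • w) w / ‖a + s • w‖) s := by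
      have h3 := hl.norm_sq.sqrt (by positivity)
      simp only [Real.sqrt_sq (norm_nonneg _)] at h3
      convert h3 using 1
      field_simp
    have := (hΦ _ h0).comp s hn
    have e : κ * (inner ℝ (a + s • w) w / ‖a + s • w‖ ^ d) =
        κ / ‖a + s • w‖ ^ (d - 1) * (inner ℝ (a + s • w) w / ‖a + s • w‖) := by
      have : ‖a + s • w‖ ^ d = ‖a + s • w‖ ^ (d - 1) * ‖a + s • w‖ := by
        rw [← pow_succ, Nat.sub_add_cancel (by omega)]
      rw [this]
      field_simp
    rw [e]
    exact this

lemma aux_mean_phi [Nonempty (Fin d)] (Φ : ℝ → ℝ) (κ : ℝ) (hd : 2 ≤ d)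
    (hΦ : ∀ r : ℝ, 0 < r → HasDerivAt Φ (κ / r ^ (d - 1)) r)
    (y b : E) (R : ℝ) (hR : 0 < R) (hy : R < ‖y - b‖) :
    IntegrableOn (fun w => Φ ‖y - w‖) (ball b R) ∧
    Φ ‖y - b‖ = ⨍ w in ball b R, Φ ‖y - w‖ := by
  constructor
  · refine IntegrableOn.mono_set (t := closedBall b R) ?_ ball_subset_closedBall
    refine ContinuousOn.integrableOn_compact (isCompact_closedBall _ _) ?_
    intro w hw
    have h0 : 0 < ‖y - w‖ := by
      have : ‖y - b‖ ≤ ‖y - w‖ + ‖w - b‖ := by simpa using norm_add_le (y - w) (w - b)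
      have h3 : ‖w - b‖ ≤ R := by simpa [dist_eq_norm] using hw
      linarith
    have h1 : ContinuousAt (fun w : E => ‖y - w‖) w := by fun_prop
    exact (ContinuousAt.comp (f := fun w : E => ‖y - w‖) (g := Φ) (hΦ _ h0).continuousAt h1).continuousWithinAt
  set a : E := b - y with ha
  have hna : ‖y - b‖ = ‖a‖ := by rw [ha, norm_sub_rev]
  rw [hna] at hy ⊢
  have hzero : ∀ s : ℝ, 0 < s → s < ‖a‖ →
      ∫ w in ball (0:E) 1, κ * (inner ℝ (a + s • w) w / ‖a + s • w‖ ^ d) = 0 := by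
    intro s hs hsa
    have h1 := aux_reflect hd (s⁻¹ • a) (by
      rw [norm_smul, norm_inv, Real.norm_eq_abs, abs_of_pos hs]
      rw [inv_mul_eq_div, one_lt_div hs]; exact hsa)
    have h2 : ∫ w in ball (0:E) 1, inner ℝ (s⁻¹ • a + w) w / ‖s⁻¹ • a + w‖ ^ d = 0 := by
      rw [← h1, ← integral_indicator measurableSet_ball, ← integral_indicator measurableSet_ball]
      refine Eq.trans ?_ (integral_add_left_eq_self _ (s⁻¹ • a))
      congr 1
      ext w
      simp [Set.indicator, dist_eq_norm]
    have h3 : ∀ w : E, κ * (inner ℝ (a + s • w) w / ‖a + s • w‖ ^ d) =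
        (κ * s / s ^ d) * (inner ℝ (s⁻¹ • a + w) w / ‖s⁻¹ • a + w‖ ^ d) := by
      intro w
      have : a + s • w = s • (s⁻¹ • a + w) := by
        rw [smul_add, smul_smul, mul_inv_cancel₀ hs.ne', one_smul]
      rw [this, real_inner_smul_left, norm_smul, mul_pow, Real.norm_eq_abs, abs_of_pos hs]
      rw [mul_div_mul_comm]
      ring
    simp only [h3]
    rw [integral_const_mul, h2, mul_zero]
  have hder := aux_deriv_int Φ κ hd hΦ a
  obtain ⟨t, ht, hslope⟩ := exists_hasDerivAt_eq_slope
    (fun s : ℝ => ∫ w in ball (0:E) 1, Φ ‖a + s • w‖) _ hR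
    (fun s hs => (hder s (by rw [abs_of_nonneg hs.1]; linarith [hs.2])).continuousAt.continuousWithinAt)
    (fun s hs => hder s (by rw [abs_of_pos hs.1]; linarith [hs.2]))
  rw [hzero t ht.1 (by linarith [ht.2])] at hslope
  have heq : ∫ w in ball (0:E) 1, Φ ‖a + R • w‖ = volume.real (ball (0:E) 1) * Φ ‖a‖ := by
    have h5 : (∫ w in ball (0:E) 1, Φ ‖a + R • w‖) - ∫ w in ball (0:E) 1, Φ ‖a + (0:ℝ) • w‖ = 0 := by
      rw [eq_comm, div_eq_iff (by linarith)] at hslope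
      linarith
    simp only [zero_smul, add_zero, setIntegral_const, smul_eq_mul] at h5
    linarith
  have hch : ∫ w in ball b R, Φ ‖y - w‖ = R ^ d * ∫ w in ball (0:E) 1, Φ ‖a + R • w‖ := by
    have := Measure.setIntegral_comp_smul_of_pos (volume : Measure E) (fun w => Φ ‖a + w‖) (ball (0:E) 1) hR
    rw [this, smul_unitBall_of_pos hR]
    simp only [finrank_euclideanSpace, Fintype.card_fin, smul_eq_mul]
    rw [← mul_assoc, mul_inv_cancel₀ (by positivity), one_mul]
    rw [← integral_indicator measurableSet_ball, ← integral_indicator measurableSet_ball]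
    rw [← integral_add_left_eq_self _ b]
    congr 1
    ext w
    have : ‖y - (b + w)‖ = ‖a + w‖ := by rw [ha, norm_sub_rev]; congr 1; abel
    simp [Set.indicator, this]
  rw [setAverage_eq, hch, heq, smul_eq_mul]
  have hv : volume.real (ball b R) = R ^ d * volume.real (ball (0:E) 1) := by
    simp only [Measure.real]
    rw [Measure.addHaar_ball_of_pos _ _ hR]
    simp [ENNReal.toReal_mul, hR.le]
  have hv0 : 0 < volume.real (ball (0:E) 1) := 
    ENNReal.toReal_pos (measure_ball_pos _ _ one_pos).ne' measure_ball_lt_top.ne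
  rw [hv]
  field_simp

end aux

section aux2
variable {d : ℕ}
local notation "E" => EuclideanSpace ℝ (Fin d)

lemma aux_phi_deriv (hd : 2 ≤ d) (c : ℝ) (Φ : ℝ → ℝ)
    (hΦ : ∀ r : ℝ, Φ r = if d = 2 then c * Real.log (1 / r) else c * r ^ ((2 : ℝ) - d)) :
    ∃ κ : ℝ, ∀ r : ℝ, 0 < r → HasDerivAt Φ (κ / r ^ (d - 1)) r := by
  by_cases h2 : d = 2
  · refine ⟨-c, fun r hr => ?_⟩
    have e : Φ = fun r => c * (- Real.log r) := by
      ext r; rw [hΦ, if_pos h2, one_div, Real.log_inv]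
    rw [e, h2]
    have := ((Real.hasDerivAt_log hr.ne').neg).const_mul c
    have e2 : -c / r ^ (2 - 1) = c * -r⁻¹ := by
      rw [show 2 - 1 = 1 from rfl, pow_one]; ring
    rw [e2]
    exact this
  · refine ⟨c * ((2:ℝ) - d), fun r hr => ?_⟩
    have e : Φ = fun r => c * r ^ ((2 : ℝ) - d) := by
      ext r; rw [hΦ, if_neg h2]
    rw [e]
    have := (Real.hasDerivAt_rpow_const (x := r) (p := (2:ℝ) - d) (Or.inl hr.ne')).const_mul c
    have e1 : ((2:ℝ) - d - 1) = -((d - 1 : ℕ) : ℝ) := by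
      rw [Nat.cast_sub (by omega)]; push_cast; ring
    rw [e1, Real.rpow_neg hr.le, Real.rpow_natCast] at this
    have e2 : c * ((2:ℝ) - d) / r ^ (d - 1) = c * (((2:ℝ) - d) * (r ^ (d - 1))⁻¹) := by ring
    rw [e2]
    exact this

lemma aux_phi_anti (hd : 2 ≤ d) (c : ℝ) (hc : 0 < c) (Φ : ℝ → ℝ)
    (hΦ : ∀ r : ℝ, Φ r = if d = 2 then c * Real.log (1 / r) else c * r ^ ((2 : ℝ) - d))
    (r s : ℝ) (hr : 0 < r) (hrs : r ≤ s) : Φ s ≤ Φ r := by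
  rw [hΦ, hΦ]
  have hs : 0 < s := by linarith
  split_ifs with h
  · gcongr
  · apply mul_le_mul_of_nonneg_left _ hc.le
    apply Real.rpow_le_rpow_of_nonpos hr hrs
    have : (2:ℝ) ≤ d := by exact_mod_cast hd
    linarith

lemma aux_phi_cmp (hd : 2 ≤ d) (c : ℝ) (hc : 0 < c) (Φ : ℝ → ℝ)
    (hΦ : ∀ r : ℝ, Φ r = if d = 2 then c * Real.log (1 / r) else c * r ^ ((2 : ℝ) - d))
    (δ R : ℝ) (hδ : 0 < δ) (hR : 0 < R) :
    ∃ K : ℝ, 0 < K ∧ ∀ s s' : ℝ, 0 < s → s ≤ δ / 2 → s ≤ 2 * s' →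
      Φ s' - Φ R ≤ K * (Φ s - Φ δ) := by
  have anti := aux_phi_anti hd c hc Φ hΦ
  by_cases h2 : d = 2
  · have e : ∀ r, Φ r = c * (- Real.log r) := by
      intro r; rw [hΦ, if_pos h2, one_div, Real.log_inv]
    have l2 : 0 < Real.log 2 := Real.log_pos (by norm_num)
    set q := |Real.log (R * 2 / δ)| with hq
    have hq0 : 0 ≤ q := abs_nonneg _
    refine ⟨q / Real.log 2 + 1, by positivity, fun s s' hs hsδ hs' => ?_⟩
    have h1 : Φ s' ≤ Φ (s / 2) := anti _ _ (by linarith) (by linarith)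
    have h3 : Φ (s/2) - Φ R = c * (Real.log (R * 2 / δ) + Real.log (δ / s)) := by
      rw [e, e, Real.log_div, Real.log_div, Real.log_div, Real.log_mul] <;> first | positivity | ring
    have h4 : Φ s - Φ δ = c * Real.log (δ / s) := by
      rw [e, e, Real.log_div] <;> first | positivity | ring
    have h5 : Real.log 2 ≤ Real.log (δ / s) := by
      apply Real.log_le_log (by norm_num)
      rw [le_div_iff₀ hs]; linarith
    have h6 : Real.log (R * 2 / δ) ≤ q := le_abs_self _
    have h7 : q ≤ q / Real.log 2 * Real.log (δ / s) := by
      rw [div_mul_eq_mul_div, le_div_iff₀ l2]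
      exact mul_le_mul_of_nonneg_left h5 hq0
    rw [h4]
    calc _ ≤ Φ (s/2) - Φ R := by linarith
      _ = _ := h3
      _ ≤ c * ((q / Real.log 2 + 1) * Real.log (δ / s)) := by
        apply mul_le_mul_of_nonneg_left _ hc.le
        linarith
      _ = _ := by ring
  · have e : ∀ r, Φ r = c * r ^ ((2 : ℝ) - d) := by
      intro r; rw [hΦ, if_neg h2]
    have hd3 : (3:ℝ) ≤ d := by exact_mod_cast (by omega : 3 ≤ d)
    set α : ℝ := (2:ℝ) - d with hα
    have hα0 : α < 0 := by rw [hα]; linarith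
    set q : ℝ := (2:ℝ) ^ α with hq
    have hq0 : 0 < q := by positivity
    have hq1 : q < 1 := Real.rpow_lt_one_of_one_lt_of_neg (by norm_num) hα0
    refine ⟨q⁻¹ / (1 - q), by apply div_pos (by positivity); linarith, fun s s' hs hsδ hs' => ?_⟩
    have h1 : Φ s' ≤ Φ (s / 2) := anti _ _ (by linarith) (by linarith)
    have h3 : Φ (s / 2) = q⁻¹ * Φ s := by
      rw [e, e, Real.div_rpow hs.le (by norm_num)]; ring
    have h4 : Φ δ ≤ q * Φ s := by
      have : Φ δ ≤ Φ (2 * s) := anti _ _ (by linarith) (by linarith)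
      refine this.trans (le_of_eq ?_)
      rw [e, e, Real.mul_rpow (by norm_num) hs.le]; ring
    have h5 : 0 ≤ Φ R := by rw [e]; positivity
    calc _ ≤ q⁻¹ * Φ s := by linarith
      _ = q⁻¹ / (1 - q) * (Φ s - q * Φ s) := by
        have : 1 - q ≠ 0 := by linarith
        field_simp
      _ ≤ _ := by
        apply mul_le_mul_of_nonneg_left (by linarith)
        apply (div_pos (by positivity) (by linarith)).le

lemma aux_harnack (f : E → ℝ) (a b : E) (r : ℝ) (hr : 0 < r)
    (hpos : ∀ x ∈ ball b (3 * r), 0 < f x) (hsub : ball a r ⊆ ball b (3 * r))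
    (ha : f a = ⨍ w in ball a r, f w) (hb : f b = ⨍ w in ball b (3 * r), f w) :
    f a ≤ 3 ^ d * f b := by
  have hv : ∀ (x : E) (t : ℝ), 0 < t → volume.real (ball x t) = t ^ d * volume.real (ball (0:E) 1) := by
    intro x t ht
    simp only [Measure.real]
    rw [Measure.addHaar_ball_of_pos _ _ ht]
    simp [ENNReal.toReal_mul, ht.le]
  have hv0 : 0 < volume.real (ball (0:E) 1) := 
    ENNReal.toReal_pos (measure_ball_pos _ _ one_pos).ne' measure_ball_lt_top.ne
  have hfb : 0 < f b := hpos b (mem_ball_self (by positivity))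
  rw [setAverage_eq, smul_eq_mul, hv _ _ hr] at ha
  rw [setAverage_eq, smul_eq_mul, hv _ _ (by positivity : 0 < 3 * r)] at hb
  have hfInt : IntegrableOn f (ball b (3 * r)) := by
    by_contra h
    rw [integral_undef h, mul_zero] at hb
    linarith
  have hle : ∫ w in ball a r, f w ≤ ∫ w in ball b (3 * r), f w := by
    refine setIntegral_mono_set hfInt ?_ (Filter.Eventually.of_forall hsub)
    rw [Filter.EventuallyLE, ae_restrict_iff' measurableSet_ball]
    exact Filter.Eventually.of_forall fun x hx => (hpos x hx).le
  rw [ha, hb, mul_pow]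
  calc _ ≤ (r ^ d * volume.real (ball (0:E) 1))⁻¹ * ∫ w in ball b (3 * r), f w := by gcongr
    _ = _ := by field_simp

lemma aux_homeo (p v : E) (r : ℝ) (hr : 0 < r) (hv : ‖v‖ ≤ r / 2) :
    ∃ T : E ≃ₜ E, (∀ x, x ∉ ball p r → T x = x) ∧ T p = p + v ∧
      (∀ x y, ‖T x - T y‖ ≤ 2 * ‖x - y‖) ∧ (∀ x y, ‖x - y‖ ≤ 2 * ‖T x - T y‖) := by
  rcases subsingleton_or_nontrivial E with hs | hs
  · exact ⟨Homeomorph.refl _, fun x _ => rfl, Subsingleton.elim _ _,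
      fun x y => by simp [Subsingleton.elim x y], fun x y => by simp [Subsingleton.elim x y]⟩
  set φ : E → ℝ := fun y => max 0 (1 - ‖y - p‖ / r) with hφ
  have hφL : ∀ x y, |φ x - φ y| ≤ ‖x - y‖ / r := by
    intro x y
    have h1 : |φ x - φ y| ≤ |(1 - ‖x - p‖ / r) - (1 - ‖y - p‖ / r)| := by
      simp only [hφ]
      have := abs_max_sub_max_le_abs (1 - ‖x - p‖ / r) (1 - ‖y - p‖ / r) 0
      rwa [max_comm _ (0:ℝ), max_comm _ (0:ℝ)] at this
    refine h1.trans ?_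
    have h2 : (1 - ‖x - p‖ / r) - (1 - ‖y - p‖ / r) = (‖y - p‖ - ‖x - p‖) / r := by ring
    rw [h2, abs_div, abs_of_pos hr]
    have h3 := abs_norm_sub_norm_le (y - p) (x - p)
    rw [sub_sub_sub_cancel_right, norm_sub_rev y x] at h3
    gcongr
  set f : E → E := fun y => y + φ y • v with hf
  have hfL : ∀ x y, ‖f x - f y - (x - y)‖ ≤ 1 / 2 * ‖x - y‖ := by
    intro x y
    have e : f x - f y - (x - y) = (φ x - φ y) • v := by
      simp only [hf, sub_smul]; abel
    rw [e, norm_smul, Real.norm_eq_abs]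
    calc _ ≤ (‖x - y‖ / r) * (r / 2) := by
          gcongr; exact hφL x y
      _ = _ := by field_simp
  have hA : ApproximatesLinearOn f ((ContinuousLinearEquiv.refl ℝ E : E ≃L[ℝ] E) : E →L[ℝ] E)
      Set.univ (1 / 2) := by
    intro x _ y _
    simpa using hfL x y
  have hN : Subsingleton E ∨ (1 / 2 : NNReal) <
      ‖((ContinuousLinearEquiv.refl ℝ E : E ≃L[ℝ] E).symm : E →L[ℝ] E)‖₊⁻¹ := by
    right
    have : ‖((ContinuousLinearEquiv.refl ℝ E : E ≃L[ℝ] E).symm : E →L[ℝ] E)‖₊ = 1 := by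
      have : ‖ContinuousLinearMap.id ℝ E‖₊ = 1 := ContinuousLinearMap.nnnorm_id
      simpa using this
    rw [this, inv_one]
    exact NNReal.half_lt_self one_ne_zero
  have hT : ∀ x, hA.toHomeomorph f hN x = f x := fun x => rfl
  refine ⟨hA.toHomeomorph f hN, ?_, ?_, ?_, ?_⟩
  · intro x hx
    rw [hT]
    have hx' : r ≤ ‖x - p‖ := by simpa [dist_eq_norm] using hx
    have : φ x = 0 := by
      simp only [hφ]
      apply max_eq_left
      have : 1 ≤ ‖x - p‖ / r := by rwa [one_le_div hr]
      linarith
    simp [hf, this]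
  · rw [hT]
    simp [hf, hφ]
  · intro x y
    rw [hT, hT]
    have h1 := hfL x y
    have h2 := norm_sub_norm_le (f x - f y) (x - y)
    have := norm_nonneg (x - y)
    linarith
  · intro x y
    rw [hT, hT]
    have h1 := hfL x y
    have h2 := norm_sub_norm_le (x - y) (f x - f y)
    rw [norm_sub_rev (x - y)] at h2
    linarith

lemma aux_vol (T : E ≃ₜ E) (hT : ∀ x y, ‖T x - T y‖ ≤ 2 * ‖x - y‖) (S : Set E)
    (hS : MeasurableSet S) (hTS : ∀ x, T x ∈ S ↔ x ∈ S) (F : E → ℝ≥0∞) :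
    ∫⁻ y in S, F y ≤ 2 ^ d * ∫⁻ y in S, F (T y) := by
  have hL : LipschitzWith 2 T := LipschitzWith.of_dist_le_mul fun x y => by
    simpa [dist_eq_norm] using hT x y
  have hH : ∃ c : NNReal, (volume : Measure E) = c • (μH[d] : Measure E) := by
    have : (μH[d] : Measure E).IsAddHaarMeasure := by
      have : (μH[Module.finrank ℝ E] : Measure E).IsAddHaarMeasure :=
        MeasureTheory.isAddHaarMeasure_hausdorffMeasure
      simpa using this
    exact ⟨_, Measure.isAddLeftInvariant_eq_smul volume (μH[d] : Measure E)⟩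
  obtain ⟨c, hc⟩ := hH
  have hle : (volume : Measure E) ≤ (2 ^ d : ℝ≥0∞) • (volume : Measure E).map T := by
    refine Measure.le_iff.2 fun s hs => ?_
    have h1 : T '' (T ⁻¹' s) = s := T.image_preimage s
    rw [Measure.smul_apply, Measure.map_apply T.measurable hs, smul_eq_mul, hc]
    simp only [Measure.smul_apply]
    have h2 := hL.hausdorffMeasure_image_le (d := (d:ℝ)) (by positivity) (T ⁻¹' s)
    rw [h1] at h2
    calc c • (μH[d] : Measure E) s ≤ c • (((2 : NNReal) : ℝ≥0∞) ^ (d:ℝ) * μH[d] (T ⁻¹' s)) := by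
          gcongr
      _ = _ := by
          rw [ENNReal.rpow_natCast]
          simp only [ENNReal.smul_def, smul_eq_mul]
          push_cast
          ring
  rw [← lintegral_indicator hS, ← lintegral_indicator hS]
  calc ∫⁻ y, S.indicator F y ≤ ∫⁻ y, S.indicator F y ∂((2 ^ d : ℝ≥0∞) • (volume : Measure E).map T) :=
        lintegral_mono' hle le_rfl
    _ = 2 ^ d * ∫⁻ y, S.indicator F (T y) := by
        rw [lintegral_smul_measure, T.measurableEmbedding.lintegral_map, smul_eq_mul]
    _ = _ := by
        congr 2
        ext y
        by_cases hy : y ∈ S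
        · rw [Set.indicator_of_mem hy, Set.indicator_of_mem ((hTS y).2 hy)]
        · rw [Set.indicator_of_notMem hy, Set.indicator_of_notMem (fun h => hy ((hTS y).1 h))]

lemma aux_tree [Nonempty (Fin d)] (D : Set E) (hD : IsOpen D) (g k : E → E → ℝ) (T : E ≃ₜ E)
    (hTD : ∀ x, T x ∈ D ↔ x ∈ D) (hT : ∀ x y, ‖T x - T y‖ ≤ 2 * ‖x - y‖) (K : ℝ≥0∞) (hK : K ≠ ⊤)
    (hk : ∀ x ∈ D, ∀ z ∈ frontier D, ENNReal.ofReal (k (T x) z) ≤ K * ENNReal.ofReal (k x z))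
    (hg : ∀ x ∈ D, ∀ y ∈ D, x ≠ y →
      2 ^ d * ENNReal.ofReal (g (T x) (T y)) ≤ K * ENNReal.ofReal (g x y))
    (z : ℕ → E) (ρ : E → Finset ℕ → ℝ≥0∞)
    (h1 : ∀ x i, ρ x {i} = ENNReal.ofReal (k x (z i)))
    (h2 : ∀ x (A' : Finset ℕ), 2 ≤ A'.card →
              ρ x A' = ∑ B ∈ A'.powerset.filter (fun B => B ≠ ∅ ∧ B ≠ A'),
                ∫⁻ y in D, ENNReal.ofReal (g x y) * ρ y B * ρ y (A' \ B) ∂volume)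
    (A : Finset ℕ) : A.Nonempty → (∀ i ∈ A, z i ∈ frontier D) → ∀ x ∈ D,
      K * ρ (T x) A ≤ (K ^ 2) ^ A.card * ρ x A := by
  induction A using Finset.strongInduction with
  | H A ih =>
  intro hA hz x hx
  rcases Nat.lt_or_ge A.card 2 with hc | hc
  · have hc1 : A.card = 1 := by have := hA.card_pos; omega
    obtain ⟨i, rfl⟩ := Finset.card_eq_one.1 hc1
    rw [h1, h1, hc1, pow_one, pow_two, mul_assoc]
    gcongr
    exact hk x hx _ (hz i (by simp))
  rw [h2 _ A hc, h2 _ A hc, Finset.mul_sum, Finset.mul_sum]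
  refine Finset.sum_le_sum fun B hB => ?_
  simp only [Finset.mem_filter, Finset.mem_powerset] at hB
  obtain ⟨hBA, hB0, hB1⟩ := hB
  have hBss : B ⊂ A := hBA.ssubset_of_ne hB1
  have hB0 : B.Nonempty := Finset.nonempty_iff_ne_empty.2 hB0
  have hCss : A \ B ⊂ A := Finset.sdiff_ssubset hBA hB0
  have hC0 : (A \ B).Nonempty := Finset.sdiff_nonempty.2 fun h => hB1 (hBA.antisymm h)
  have hcard : A.card = B.card + (A \ B).card := by
    have := Finset.card_sdiff_add_card_eq_card hBA
    omega
  have hv := aux_vol T hT D hD.measurableSet hTD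
    (fun y => ENNReal.ofReal (g (T x) y) * ρ y B * ρ y (A \ B))
  calc _ ≤ K * (2 ^ d * ∫⁻ y in D, ENNReal.ofReal (g (T x) (T y)) * ρ (T y) B * ρ (T y) (A \ B)) := by
        gcongr
    _ = ∫⁻ y in D, (K * 2 ^ d) * (ENNReal.ofReal (g (T x) (T y)) * ρ (T y) B * ρ (T y) (A \ B)) := by
        rw [lintegral_const_mul' _ _ (ENNReal.mul_ne_top hK (by finiteness)), mul_assoc]
    _ ≤ ∫⁻ y in D, (K ^ 2) ^ A.card * (ENNReal.ofReal (g x y) * ρ y B * ρ y (A \ B)) := by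
        apply lintegral_mono_ae
        rw [ae_restrict_iff' hD.measurableSet]
        have hne : ∀ᵐ y : E, y ≠ x := by
          rw [ae_iff]; simp
        filter_upwards [hne] with y hyx hy
        have a1 := hg x hx y hy hyx.symm
        have a2 := ih B hBss hB0 (fun i hi => hz i (hBA hi)) y hy
        have a3 := ih _ hCss hC0 (fun i hi => hz i (hCss.1 hi)) y hy
        calc _ = (2 ^ d * ENNReal.ofReal (g (T x) (T y))) * (K * ρ (T y) B) * ρ (T y) (A \ B) := by ring
          _ ≤ (K * ENNReal.ofReal (g x y)) * ((K ^ 2) ^ B.card * ρ y B) * ρ (T y) (A \ B) := by gcongr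
          _ = ENNReal.ofReal (g x y) * ((K ^ 2) ^ B.card * ρ y B) * (K * ρ (T y) (A \ B)) := by ring
          _ ≤ ENNReal.ofReal (g x y) * ((K ^ 2) ^ B.card * ρ y B) * ((K ^ 2) ^ (A \ B).card * ρ y (A \ B)) := by gcongr
          _ = _ := by rw [hcard, pow_add]; ring
    _ = _ := by
        rw [lintegral_const_mul' _ _ (by finiteness)]

end aux2

section aux3
variable {d : ℕ}
local notation "E" => EuclideanSpace ℝ (Fin d)

lemma aux_g_bounds (D : Set E) (σ : Measure E) (hσ : σ (frontier D)ᶜ = 0)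
    (Φ : ℝ → ℝ) (g : E → E → ℝ)
    (hg_rep : ∀ x ∈ D, ∃ h : E → ℝ,
      ContinuousOn h (closure D) ∧
      (∀ y ∈ D, ∀ r > 0, closedBall y r ⊆ D → h y = ⨍ w in ball y r, h w ∂volume) ∧
      (∀ z ∈ frontier D, h z = Φ ‖x - z‖) ∧
      (∀ y ∈ D, y ≠ x → g x y = Φ ‖x - y‖ - h y))
    (k : E → E → ℝ)
    (hk_pos : ∀ x ∈ D, ∀ z ∈ frontier D, 0 < k x z)
    (hk_poisson : ∀ x ∈ D, ∀ f : E → ℝ,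
      ContinuousOn f (closure D) →
      (∀ y ∈ D, ∀ r > 0, closedBall y r ⊆ D → f y = ⨍ w in ball y r, f w ∂volume) →
      f x = ∫ z, f z * k x z ∂σ)
    (x y : E) (hx : x ∈ D) (hy : y ∈ D) (hne : y ≠ x) (m M : ℝ)
    (hm : ∀ z ∈ frontier D, m ≤ Φ ‖x - z‖) (hM : ∀ z ∈ frontier D, Φ ‖x - z‖ ≤ M) :
    Φ ‖x - y‖ - M ≤ g x y ∧ g x y ≤ Φ ‖x - y‖ - m := by
  obtain ⟨h, hcont, hmean, hbd, hrep⟩ := hg_rep x hx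
  have h1 := hk_poisson y hy (fun _ => 1) continuousOn_const (by
    intro w _ r hr _
    rw [setAverage_const (measure_ball_pos _ _ hr).ne' measure_ball_lt_top.ne])
  simp only [one_mul] at h1
  have hki : Integrable (fun z => k y z) σ := by
    by_contra hcon
    rw [integral_undef hcon] at h1
    norm_num at h1
  have hae : ∀ᵐ z ∂σ, z ∈ frontier D := by
    rw [ae_iff]; exact hσ
  have hmeas : AEStronglyMeasurable h σ := by
    have : σ.restrict (closure D) = σ := by
      apply Measure.restrict_eq_self_of_ae_mem
      filter_upwards [hae] with z hz using frontier_subset_closure hz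
    rw [← this]
    exact hcont.aestronglyMeasurable isClosed_closure.measurableSet
  have hb : ∀ᵐ z ∂σ, ‖h z‖ ≤ max |m| |M| := by
    filter_upwards [hae] with z hz
    rw [hbd z hz, Real.norm_eq_abs]
    exact abs_le_max_abs_abs (hm z hz) (hM z hz)
  have hhi : Integrable (fun z => h z * k y z) σ := hki.bdd_mul hmeas hb
  have h2 := hk_poisson y hy h hcont hmean
  have h3 : m ≤ h y := by
    have : ∫ z, m * k y z ∂σ ≤ ∫ z, h z * k y z ∂σ := by
      refine integral_mono_ae (hki.const_mul m) hhi ?_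
      filter_upwards [hae] with z hz
      rw [hbd z hz]
      exact mul_le_mul_of_nonneg_right (hm z hz) (hk_pos y hy z hz).le
    rw [integral_const_mul, ← h1, ← h2, mul_one] at this
    exact this
  have h4 : h y ≤ M := by
    have : ∫ z, h z * k y z ∂σ ≤ ∫ z, M * k y z ∂σ := by
      refine integral_mono_ae hhi (hki.const_mul M) ?_
      filter_upwards [hae] with z hz
      rw [hbd z hz]
      exact mul_le_mul_of_nonneg_right (hM z hz) (hk_pos y hy z hz).le
    rw [integral_const_mul, ← h1, ← h2, mul_one] at this
    exact this
  rw [hrep y hy hne]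
  constructor <;> linarith

lemma aux_local [Nonempty (Fin d)] (hd : 2 ≤ d)
    (D : Set E) (hD : IsOpen D) (hDb : Bornology.IsBounded D)
    (σ : Measure E) (hσ : σ (frontier D)ᶜ = 0)
    (c : ℝ) (hc : 0 < c) (Φ : ℝ → ℝ)
    (hΦ : ∀ r : ℝ, Φ r = if d = 2 then c * Real.log (1 / r) else c * r ^ ((2 : ℝ) - d))
    (g : E → E → ℝ)
    (hg_sym : ∀ x ∈ D, ∀ y ∈ D, g x y = g y x)
    (hg_pos : ∀ x ∈ D, ∀ y ∈ D, 0 < g x y)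
    (hg_rep : ∀ x ∈ D, ∃ h : E → ℝ,
      ContinuousOn h (closure D) ∧
      (∀ y ∈ D, ∀ r > 0, closedBall y r ⊆ D → h y = ⨍ w in ball y r, h w ∂volume) ∧
      (∀ z ∈ frontier D, h z = Φ ‖x - z‖) ∧
      (∀ y ∈ D, y ≠ x → g x y = Φ ‖x - y‖ - h y))
    (k : E → E → ℝ)
    (hk_pos : ∀ x ∈ D, ∀ z ∈ frontier D, 0 < k x z)
    (hk_harm : ∀ z ∈ frontier D, ∀ y ∈ D, ∀ r > 0, closedBall y r ⊆ D →
      k y z = ⨍ w in ball y r, k w z ∂volume)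
    (hk_poisson : ∀ x ∈ D, ∀ f : E → ℝ,
      ContinuousOn f (closure D) →
      (∀ y ∈ D, ∀ r > 0, closedBall y r ⊆ D → f y = ⨍ w in ball y r, f w ∂volume) →
      f x = ∫ z, f z * k x z ∂σ)
    (p : E) (hp : p ∈ D) :
    ∃ r > 0, ∃ K : ℝ, 1 ≤ K ∧ ∀ T : E ≃ₜ E, (∀ x, x ∉ ball p r → T x = x) →
      (∀ x y, ‖x - y‖ ≤ 2 * ‖T x - T y‖) →
      (∀ x, T x ∈ D ↔ x ∈ D) ∧ (∀ x ∈ D, ∀ z ∈ frontier D, k (T x) z ≤ K * k x z) ∧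
      (∀ x ∈ D, ∀ y ∈ D, x ≠ y → g (T x) (T y) ≤ K * g x y) := by
  obtain ⟨r0, hr0, hball⟩ := Metric.nhds_basis_closedBall.mem_iff.1 (hD.mem_nhds hp)
  set r := r0 / 20 with hr
  have hrpos : 0 < r := by positivity
  have hrr : r0 = 20 * r := by rw [hr]; ring
  rw [hrr] at hball
  have hsub : ∀ x : E, ‖x - p‖ ≤ 20 * r → x ∈ D := fun x hx => hball (by
    simpa [dist_eq_norm] using hx)
  have hfr : ∀ z ∈ frontier D, 20 * r ≤ ‖z - p‖ := by
    intro z hz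
    by_contra hcon
    push Not at hcon
    have : z ∈ D := hsub z hcon.le
    rw [hD.frontier_eq] at hz
    exact hz.2 this
  obtain ⟨R, hR⟩ := hDb.closure.subset_ball p
  have hRp : 0 < R := by
    have := hR (subset_closure hp)
    simpa using this
  obtain ⟨K1, hK1, hcmp⟩ := aux_phi_cmp hd c hc Φ hΦ (12 * r) (R + r) (by positivity) (by positivity)
  have anti := aux_phi_anti hd c hc Φ hΦ
  obtain ⟨κ, hκ⟩ := aux_phi_deriv hd c Φ hΦ
  have tri : ∀ a b e : E, ‖a - e‖ ≤ ‖a - b‖ + ‖b - e‖ := fun a b e => norm_sub_le_norm_sub_add_norm_sub a b e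
  -- bounds on g near p
  have gb : ∀ x y : E, ‖x - p‖ < r → y ∈ D → y ≠ x →
      Φ ‖x - y‖ - Φ (12 * r) ≤ g x y ∧ g x y ≤ Φ ‖x - y‖ - Φ (R + r) := by
    intro x y hx hy hne
    refine aux_g_bounds D σ hσ Φ g hg_rep k hk_pos hk_poisson x y (hsub x (by linarith)) hy hne _ _ ?_ ?_
    · intro z hz
      have h1 := hfr z hz
      have h2 : ‖z - p‖ < R := by simpa [dist_eq_norm] using hR (frontier_subset_closure hz)
      have h3 := tri z x p
      have h4 := tri x p z
      rw [norm_sub_rev p z] at h4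
      rw [norm_sub_rev z x] at h3
      apply anti <;> linarith
    · intro z hz
      have h1 := hfr z hz
      have h3 := tri z x p
      rw [norm_sub_rev z x] at h3
      apply anti <;> linarith
  -- Harnack inside the ball
  have harn : ∀ f : E → ℝ, (∀ x, ‖x - p‖ < 4 * r → 0 < f x) →
      (∀ a t, 0 < t → t ≤ 3 * r → ‖a - p‖ < r → f a = ⨍ w in ball a t, f w) →
      ∀ a b : E, ‖a - p‖ < r → ‖b - p‖ < r → f a ≤ 3 ^ d * f b := by
    intro f hf hmean a b ha hb
    refine aux_harnack f a b r hrpos ?_ ?_ (hmean a r hrpos (by linarith) ha)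
      (hmean b (3 * r) (by positivity) le_rfl hb)
    · intro x hx
      apply hf
      have hx : ‖x - b‖ < 3 * r := by simpa [dist_eq_norm] using hx
      linarith [tri x b p]
    · apply ball_subset_ball'
      rw [dist_eq_norm]
      have := tri a p b
      rw [norm_sub_rev p b] at this
      linarith
  have cb : ∀ (a : E) (t : ℝ), t ≤ 3 * r → ‖a - p‖ < r → closedBall a t ⊆ D := by
    intro a t ht ha w hw
    apply hsub
    have hw : ‖w - a‖ ≤ t := by simpa [dist_eq_norm] using hw
    linarith [tri w a p]
  have gfar : ∀ y ∈ D, 5 * r ≤ ‖y - p‖ → ∀ a b : E, ‖a - p‖ < r → ‖b - p‖ < r →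
      g y a ≤ 3 ^ d * g y b := by
    intro y hy hyp
    refine harn (g y) (fun x hx => hg_pos y hy x (hsub x (by linarith))) ?_
    intro a t ht ht3 ha
    obtain ⟨h, hcont, hmean, hbd, hrep⟩ := hg_rep y hy
    have hcb := cb a t ht3 ha
    have haD : a ∈ D := hcb (mem_closedBall_self ht.le)
    have hya : t < ‖y - a‖ := by linarith [tri y a p]
    obtain ⟨hi, hΦm⟩ := aux_mean_phi Φ κ hd hκ y a t ht hya
    have hhi : IntegrableOn h (ball a t) :=
      ((hcont.mono (hcb.trans subset_closure)).integrableOn_compact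
        (isCompact_closedBall a t)).mono_set ball_subset_closedBall
    have hne : ∀ w ∈ ball a t, w ≠ y := by
      rintro w hw rfl
      have : ‖w - a‖ < t := by simpa [dist_eq_norm] using hw
      linarith
    rw [hrep a haD (hne a (mem_ball_self ht)), hΦm, hmean a haD t ht hcb]
    simp only [setAverage_eq]
    rw [← smul_sub, ← integral_sub hi hhi]
    congr 1
    refine setIntegral_congr_fun measurableSet_ball fun w hw => ?_
    exact (hrep w (hcb (ball_subset_closedBall hw)) (hne w hw)).symm
  set K : ℝ := 3 ^ d + K1 with hK
  have h3d : (1:ℝ) ≤ 3 ^ d := one_le_pow₀ (by norm_num)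
  refine ⟨r, hrpos, K, by linarith, fun T hT hT2 => ?_⟩
  have hTb : ∀ x, ‖x - p‖ < r → ‖T x - p‖ < r := by
    intro x hx
    by_contra hcon
    have h1 : T (T x) = T x := hT _ (by simpa [dist_eq_norm] using hcon)
    have h2 := T.injective h1
    rw [h2] at hcon
    exact hcon hx
  have hTo : ∀ x, ¬ ‖x - p‖ < r → T x = x := fun x hx => hT x (by simpa [dist_eq_norm] using hx)
  have hTD : ∀ x, T x ∈ D ↔ x ∈ D := by
    intro x
    by_cases hx : ‖x - p‖ < r
    · exact iff_of_true (hsub _ (by linarith [hTb x hx])) (hsub _ (by linarith))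
    · rw [hTo x hx]
  refine ⟨hTD, ?_, ?_⟩
  · intro x hx z hz
    have hkp := hk_pos x hx z hz
    by_cases hxp : ‖x - p‖ < r
    · have := harn (fun w => k w z) (fun x hx => hk_pos x (hsub x (by linarith)) z hz)
        (fun a t ht ht3 ha => hk_harm z hz a (hsub a (by linarith)) t ht (cb a t ht3 ha))
        (T x) x (hTb x hxp) hxp
      refine this.trans ?_
      apply mul_le_mul_of_nonneg_right _ hkp.le
      linarith
    · rw [hTo x hxp]
      nlinarith
  · have main : ∀ x ∈ D, ∀ y ∈ D, x ≠ y → ‖x - p‖ < r → g (T x) (T y) ≤ K * g x y := by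
      intro x hx y hy hne hxp
      have hgp := hg_pos x hx y hy
      by_cases hyp : ‖y - p‖ < 5 * r
      · have h1 := (gb x y hxp hy hne.symm).1
        have h2 := (gb (T x) (T y) (hTb x hxp) ((hTD y).2 hy) (fun h => hne (T.injective h).symm)).2
        have h3 : ‖x - y‖ ≤ 12 * r / 2 := by
          have := tri x p y
          rw [norm_sub_rev p y] at this
          linarith
        have h4 := hcmp ‖x - y‖ ‖T x - T y‖ (norm_pos_iff.2 (sub_ne_zero.2 hne)) h3 (hT2 x y)
        have h5 : K1 * (Φ ‖x - y‖ - Φ (12 * r)) ≤ K1 * g x y := mul_le_mul_of_nonneg_left h1 hK1.le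
        have h6 : K1 * g x y ≤ K * g x y := mul_le_mul_of_nonneg_right (by linarith) hgp.le
        linarith
      · push Not at hyp
        rw [hTo y (by linarith), hg_sym _ ((hTD x).2 hx) y hy, hg_sym x hx y hy]
        refine (gfar y hy hyp (T x) x (hTb x hxp) hxp).trans ?_
        apply mul_le_mul_of_nonneg_right (by linarith) (hg_pos y hy x hx).le
    intro x hx y hy hne
    by_cases hxp : ‖x - p‖ < r
    · exact main x hx y hy hne hxp
    by_cases hyp : ‖y - p‖ < r
    · rw [hg_sym _ ((hTD x).2 hx) _ ((hTD y).2 hy), hg_sym x hx y hy]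
      exact main y hy x hx hne.symm hyp
    · rw [hTo x hxp, hTo y hyp]
      have := hg_pos x hx y hy
      nlinarith

/-- `ρ(x, ·) ≤ lam ^ n ρ(y, ·)` for all admissible moment densities. -/
def auxCmp (D : Set E) (g k : E → E → ℝ) (lam : ℝ) (x y : E) : Prop :=
  0 < lam ∧ ∀ (z : ℕ → E) (A : Finset ℕ), A.Nonempty →
          (∀ i ∈ A, z i ∈ frontier D) →
          ∀ ρ : E → Finset ℕ → ℝ≥0∞,
            (∀ x i, ρ x {i} = ENNReal.ofReal (k x (z i))) →
            (∀ x (A' : Finset ℕ), 2 ≤ A'.card →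
              ρ x A' = ∑ B ∈ A'.powerset.filter (fun B => B ≠ ∅ ∧ B ≠ A'),
                ∫⁻ y in D, ENNReal.ofReal (g x y) * ρ y B * ρ y (A' \ B) ∂volume) →
              ρ x A ≤ ENNReal.ofReal lam ^ A.card * ρ y A

lemma auxCmp.mono {D : Set E} {g k : E → E → ℝ} {l l' : ℝ} {x y : E}
    (h : auxCmp D g k l x y) (hl : l ≤ l') : auxCmp D g k l' x y := by
  refine ⟨h.1.trans_le hl, fun z A hA hz ρ h1 h2 => (h.2 z A hA hz ρ h1 h2).trans ?_⟩
  gcongr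

lemma auxCmp.trans {D : Set E} {g k : E → E → ℝ} {l l' : ℝ} {x y w : E}
    (h : auxCmp D g k l x y) (h' : auxCmp D g k l' y w) : auxCmp D g k (l * l') x w := by
  refine ⟨mul_pos h.1 h'.1, fun z A hA hz ρ h1 h2 => (h.2 z A hA hz ρ h1 h2).trans ?_⟩
  rw [ENNReal.ofReal_mul h.1.le, mul_pow, mul_assoc]
  gcongr
  exact h'.2 z A hA hz ρ h1 h2

lemma aux_step [Nonempty (Fin d)] (D : Set E) (hD : IsOpen D) (g k : E → E → ℝ) (T : E ≃ₜ E)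
    (K : ℝ) (hK : 1 ≤ K) (hT : ∀ x y, ‖T x - T y‖ ≤ 2 * ‖x - y‖)
    (hTD : ∀ x, T x ∈ D ↔ x ∈ D) (hk : ∀ x ∈ D, ∀ z ∈ frontier D, k (T x) z ≤ K * k x z)
    (hg : ∀ x ∈ D, ∀ y ∈ D, x ≠ y → g (T x) (T y) ≤ K * g x y) (x : E) (hx : x ∈ D) :
    auxCmp D g k ((2 ^ d * K) ^ 2) (T x) x := by
  have h2 : (1:ℝ) ≤ 2 ^ d := one_le_pow₀ (by norm_num)
  have hK0 : 0 ≤ K := by linarith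
  have e2 : ENNReal.ofReal (2 ^ d * K) = 2 ^ d * ENNReal.ofReal K := by
    rw [ENNReal.ofReal_mul (by positivity), ENNReal.ofReal_pow (by norm_num)]
    simp
  refine ⟨by positivity, fun z A hA hz ρ h1 h2' => ?_⟩
  have := aux_tree D hD g k T hTD hT (ENNReal.ofReal (2 ^ d * K)) ENNReal.ofReal_ne_top ?_ ?_
    z ρ h1 h2' A hA hz x hx
  · rw [ENNReal.ofReal_pow (by positivity)]
    refine le_trans ?_ this
    apply le_mul_of_one_le_left zero_le
    rw [ENNReal.one_le_ofReal]
    nlinarith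
  · intro x hx z hz
    rw [e2, mul_assoc, ← ENNReal.ofReal_mul hK0]
    refine (ENNReal.ofReal_le_ofReal (hk x hx z hz)).trans ?_
    exact le_mul_of_one_le_left zero_le (one_le_pow₀ (by norm_num))
  · intro x hx y hy hne
    rw [e2, mul_assoc, ← ENNReal.ofReal_mul hK0]
    gcongr
    exact hg x hx y hy hne

end aux3

/-- **Main comparison theorem.** Let `D ⊂ ℝ^d`, `d ≥ 2`, be a bounded (smooth) domain,
`g` its Green's kernel (characterized as the fundamental solution `Φ‖x - ·‖` minus a
harmonic corrector, harmonicity being expressed by the mean value property, with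
boundary values making `g` vanish on `∂D`), `k` its Poisson kernel (characterized as
the positive kernel, harmonic in the interior variable, vanishing at boundary points
other than its pole, which represents harmonic functions against the surface measure
`σ`), and let `ρ` be the moment densities defined by the recursion
`ρ(x, z_{i}) = k(x, z_i)`,
`ρ(x, z_A) = ∑_{∅ ≠ B ⊊ A} ∫_D g(x,y) ρ(y,z_B) ρ(y,z_{A∖B}) dy`.
Then for every compact `C ⊆ D` there is `λ > 0`, depending only on `C` and `D`, with
`ρ(x, z_1, …, z_n) ≤ λ^n ρ(x₀, z_1, …, z_n)` for all `n ≥ 1`, all `x, x₀ ∈ C` and all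
distinct `z_1, …, z_n ∈ ∂D`. -/
theorem moment_density_comparison (d : ℕ) (hd : 2 ≤ d)
    (D : Set (EuclideanSpace ℝ (Fin d))) (hD : IsOpen D) (hDb : Bornology.IsBounded D)
    (hDconn : IsConnected D)
    -- the surface measure on `∂D`
    (σ : Measure (EuclideanSpace ℝ (Fin d))) (hσ : σ (frontier D)ᶜ = 0)
    -- the normalizing constant and fundamental solution `Φ` of `Δu = 2δ₀`
    (c : ℝ) (hc : 0 < c)
    (Φ : ℝ → ℝ)
    (hΦ : ∀ r : ℝ, Φ r = if d = 2 then c * Real.log (1 / r) else c * r ^ ((2 : ℝ) - d))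
    -- the Green's kernel `g` of `D`
    (g : EuclideanSpace ℝ (Fin d) → EuclideanSpace ℝ (Fin d) → ℝ)
    (hg_sym : ∀ x ∈ D, ∀ y ∈ D, g x y = g y x)
    (hg_pos : ∀ x ∈ D, ∀ y ∈ D, 0 < g x y)
    (hg_rep : ∀ x ∈ D, ∃ h : EuclideanSpace ℝ (Fin d) → ℝ,
      ContinuousOn h (closure D) ∧
      (∀ y ∈ D, ∀ r > 0, closedBall y r ⊆ D → h y = ⨍ w in ball y r, h w ∂volume) ∧
      (∀ z ∈ frontier D, h z = Φ ‖x - z‖) ∧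
      (∀ y ∈ D, y ≠ x → g x y = Φ ‖x - y‖ - h y))
    -- the Poisson kernel `k` of `D`
    (k : EuclideanSpace ℝ (Fin d) → EuclideanSpace ℝ (Fin d) → ℝ)
    (hk_pos : ∀ x ∈ D, ∀ z ∈ frontier D, 0 < k x z)
    (hk_harm : ∀ z ∈ frontier D, ∀ y ∈ D, ∀ r > 0, closedBall y r ⊆ D →
      k y z = ⨍ w in ball y r, k w z ∂volume)
    (hk_bdry : ∀ z ∈ frontier D, ∀ w ∈ frontier D, w ≠ z →
      Filter.Tendsto (fun y => k y z) (nhdsWithin w D) (nhds 0))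
    (hk_poisson : ∀ x ∈ D, ∀ f : EuclideanSpace ℝ (Fin d) → ℝ,
      ContinuousOn f (closure D) →
      (∀ y ∈ D, ∀ r > 0, closedBall y r ⊆ D → f y = ⨍ w in ball y r, f w ∂volume) →
      f x = ∫ z, f z * k x z ∂σ) :
    -- conclusion: the Harnack-type comparison for the moment densities `ρ`
    ∀ C : Set (EuclideanSpace ℝ (Fin d)), IsCompact C → C ⊆ D →
      ∃ lam : ℝ, 0 < lam ∧
        ∀ (z : ℕ → EuclideanSpace ℝ (Fin d)) (A : Finset ℕ), A.Nonempty →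
          (∀ i ∈ A, z i ∈ frontier D) → Set.InjOn z A →
          ∀ ρ : EuclideanSpace ℝ (Fin d) → Finset ℕ → ℝ≥0∞,
            (∀ x i, ρ x {i} = ENNReal.ofReal (k x (z i))) →
            (∀ x (A' : Finset ℕ), 2 ≤ A'.card →
              ρ x A' = ∑ B ∈ A'.powerset.filter (fun B => B ≠ ∅ ∧ B ≠ A'),
                ∫⁻ y in D, ENNReal.ofReal (g x y) * ρ y B * ρ y (A' \ B) ∂volume) →
            ∀ x ∈ C, ∀ x0 ∈ C,
              ρ x A ≤ ENNReal.ofReal lam ^ A.card * ρ x0 A := by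
  intro C hC hCD
  have : Nonempty (Fin d) := ⟨⟨0, by omega⟩⟩
  have hloc : ∀ p ∈ D, ∃ s > 0, ∃ M : ℝ, ∀ q ∈ ball p s, auxCmp D g k M p q ∧ auxCmp D g k M q p := by
    intro p hp
    obtain ⟨r, hr, K, hK, hT⟩ := aux_local hd D hD hDb σ hσ c hc Φ hΦ g hg_sym hg_pos hg_rep k
      hk_pos hk_harm hk_poisson p hp
    refine ⟨r / 2, by positivity, (2 ^ d * K) ^ 2, fun q hq => ?_⟩
    have hq' : ‖q - p‖ < r / 2 := by simpa [dist_eq_norm] using hq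
    obtain ⟨T, hT1, hTp, hTL, hTL'⟩ := aux_homeo p (q - p) r hr hq'.le
    have hTp : T p = q := by rw [hTp]; abel
    obtain ⟨hTD, hTk, hTg⟩ := hT T hT1 hTL'
    have hS1 : ∀ x, x ∉ ball p r → T.symm x = x := by
      intro x hx
      rw [T.symm_apply_eq, hT1 x hx]
    obtain ⟨hSD, hSk, hSg⟩ := hT T.symm hS1 (fun x y => by simpa using hTL (T.symm x) (T.symm y))
    have hqD : q ∈ D := by rw [← hTp]; exact (hTD p).2 hp
    have h1 := aux_step D hD g k T K hK hTL hTD hTk hTg p hp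
    have h2 := aux_step D hD g k T.symm K hK
      (fun x y => by simpa using hTL' (T.symm x) (T.symm y)) hSD hSk hSg q hqD
    rw [hTp] at h1
    rw [(T.symm_apply_eq).2 hTp.symm] at h2
    exact ⟨h2, h1⟩
  have hall : ∀ x ∈ D, ∀ y ∈ D, ∃ M, auxCmp D g k M x y := by
    intro x hx y hy
    refine hDconn.isPreconnected.induction₂' (fun x y => ∃ M, auxCmp D g k M x y) ?_ ?_ hx hy
    · intro p hp
      obtain ⟨s, hs, M, hM⟩ := hloc p hp
      filter_upwards [mem_nhdsWithin_of_mem_nhds (ball_mem_nhds p hs)] with q hq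
      exact ⟨⟨M, (hM q hq).1⟩, ⟨M, (hM q hq).2⟩⟩
    · rintro a b e - - - ⟨M, hM⟩ ⟨M', hM'⟩
      exact ⟨_, hM.trans hM'⟩
  obtain ⟨p0, hp0⟩ := hDconn.nonempty
  have hcpt : ∃ M, ∀ x ∈ C, auxCmp D g k M x p0 ∧ auxCmp D g k M p0 x := by
    refine hC.induction_on (p := fun S => ∃ M, ∀ x ∈ S, auxCmp D g k M x p0 ∧ auxCmp D g k M p0 x)
      ⟨1, fun x hx => hx.elim⟩ ?_ ?_ ?_
    · rintro s t hst ⟨M, hM⟩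
      exact ⟨M, fun x hx => hM x (hst hx)⟩
    · rintro s t ⟨M, hM⟩ ⟨M', hM'⟩
      refine ⟨max M M', fun x hx => ?_⟩
      rcases hx with hx | hx
      · exact ⟨(hM x hx).1.mono (le_max_left _ _), (hM x hx).2.mono (le_max_left _ _)⟩
      · exact ⟨(hM' x hx).1.mono (le_max_right _ _), (hM' x hx).2.mono (le_max_right _ _)⟩
    · intro p hp
      obtain ⟨s, hs, M, hM⟩ := hloc p (hCD hp)
      obtain ⟨M1, hM1⟩ := hall p (hCD hp) p0 hp0
      obtain ⟨M2, hM2⟩ := hall p0 hp0 p (hCD hp)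
      refine ⟨ball p s, mem_nhdsWithin_of_mem_nhds (ball_mem_nhds p hs), max (M * M1) (M2 * M),
        fun q hq => ?_⟩
      exact ⟨((hM q hq).2.trans hM1).mono (le_max_left _ _),
        (hM2.trans (hM q hq).1).mono (le_max_right _ _)⟩
  obtain ⟨M, hM⟩ := hcpt
  rcases C.eq_empty_or_nonempty with rfl | ⟨x1, hx1⟩
  · exact ⟨1, one_pos, fun _ _ _ _ _ _ _ _ x hx => hx.elim⟩
  have hMp := (hM x1 hx1).1.1
  refine ⟨M * M, mul_pos hMp hMp, fun z A hA hz _ ρ h1 h2 x hx x0 hx0 => ?_⟩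
  exact ((hM x hx).1.trans (hM x0 hx0).2).2 z A hA hz ρ h1 h2
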